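/- arXiv:math/0307401 — 2 statements merged into one kernel-verified Lean document; each statement's English description precedes it below -/
import Mathlib

section
/- Let i, j be positive integers, and let w and s be 7/3-power-free finite binary words such that |w| = 2^{i+1} − 1 or |w| = 3·2^i − 1, and |s| = 2^{j+1} − 1 or |s| = 3·2^j − 1, with |s| ≥ |w|. Let a be a letter of Σ₂. Then the word s a w a w a s contains a 7/3-power as a subword. -/
/-- The Thue–Morse morphism `μ` on a single letter (`false` = 0, `true` = 1):
`μ(0) = 01`, `μ(1) = 10`. -/
def muLetter : Bool → List Bool
  | false => [false, true]
  | true  => [true, false]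

/-- The Thue–Morse morphism `μ` on binary words. -/
def mu (w : List Bool) : List Bool := (w.map muLetter).flatten

/-- `z` is a `β`-power (for a rational `β`): `z = xⁿx'` with `x'` a prefix of `x`
and `n + |x'|/|x| = β`. -/
def IsPower (β : ℚ) (z : List Bool) : Prop :=
  ∃ (n : ℕ) (x x' : List Bool), x ≠ [] ∧ x' <+: x ∧
    z = (List.replicate n x).flatten ++ x' ∧
    (n : ℚ) + (x'.length : ℚ) / (x.length : ℚ) = β

/-- The finite word `w` is `α`-power-free: no subword (contiguous factor) of `w`
is a `β`-power for any rational `β ≥ α`. -/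
def PowerFree (α : ℝ) (w : List Bool) : Prop :=
  ∀ z : List Bool, z <:+: w → ∀ β : ℚ, α ≤ (β : ℝ) → ¬ IsPower β z

/-- The finite word `w` contains an `α`-power: some subword of `w` is a
`β`-power for some rational `β ≥ α`. -/
def ContainsPower (α : ℝ) (w : List Bool) : Prop :=
  ∃ z : List Bool, z <:+: w ∧ ∃ β : ℚ, α ≤ (β : ℝ) ∧ IsPower β z

/-- `z` is a (finite) subword of the infinite word `w : ℕ → Bool`. -/
def InfSubword (z : List Bool) (w : ℕ → Bool) : Prop :=
  ∃ i : ℕ, z = (List.range z.length).map fun k => w (i + k)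

/-- The infinite word `w` is `α`-power-free. -/
def PowerFreeInf (α : ℝ) (w : ℕ → Bool) : Prop :=
  ∀ z : List Bool, InfSubword z w → ∀ β : ℚ, α ≤ (β : ℝ) → ¬ IsPower β z

/-- The infinite word `w` contains an `α`-power. -/
def ContainsPowerInf (α : ℝ) (w : ℕ → Bool) : Prop :=
  ∃ z : List Bool, InfSubword z w ∧ ∃ β : ℚ, α ≤ (β : ℝ) ∧ IsPower β z

/-- The length-`n` prefix of an infinite word. -/
def wordPrefix (w : ℕ → Bool) (n : ℕ) : List Bool := (List.range n).map w

/-- `h : Σ₂* → Σ₂*` is a morphism. -/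
def IsMorphism (h : List Bool → List Bool) : Prop :=
  ∀ x y : List Bool, h (x ++ y) = h x ++ h y

/-- A morphism is non-erasing if it erases neither letter. -/
def NonErasing (h : List Bool → List Bool) : Prop :=
  h [false] ≠ [] ∧ h [true] ≠ []

/-- The infinite word `u` is the image of the infinite word `w` under the morphism `h`
(obtained by concatenating the images of the letters of `w`): every `h(w[0..n))` is a
prefix of `u`, and these prefixes exhaust `u`. -/
def IsMorphImage (h : List Bool → List Bool) (w u : ℕ → Bool) : Prop :=
  (∀ n : ℕ, wordPrefix u (h (wordPrefix w n)).length = h (wordPrefix w n)) ∧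
  ∀ m : ℕ, ∃ n : ℕ, m ≤ (h (wordPrefix w n)).length

/-- The complementation morphism `E` : `E(0) = 1`, `E(1) = 0`. -/
def eMorph (w : List Bool) : List Bool := w.map fun b => !b

/-- The Thue–Morse word `μ^ω(0)` (`tm n` = parity of the binary digit sum of `n`). -/
def tm (n : ℕ) : Bool := (Nat.digits 2 n).sum % 2 == 1

/-- `μ³(0) = 01101001`. -/
def w01101001 : List Bool := [false, true, true, false, true, false, false, true]

/-- `μ³(1) = 10010110`. -/
def w10010110 : List Bool := [true, false, false, true, false, true, true, false]


/-- The first `L` letters of `f` contain a factor with period `q` and length at least `7q/3`. -/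
def HasPow (f : ℕ → Bool) (L : ℕ) : Prop :=
  ∃ st len q : ℕ, 0 < q ∧ 7 * q ≤ 3 * len ∧ st + len ≤ L ∧
    ∀ t, t + q < len → f (st + t) = f (st + t + q)

/-- Decomposition of a periodic list into copies of its period. -/
lemma periodic_decomp (x : List Bool) (n r : ℕ) (hr : r < x.length) :
    ∀ z : List Bool, z.length = n * x.length + r →
      (∀ t, t < z.length → z[t]? = x[t % x.length]?) →
      z = (List.replicate n x).flatten ++ x.take r := by
  induction n with
  | zero =>
    intro z hz h
    simp only [List.replicate_zero, List.flatten_nil, List.nil_append]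
    apply List.ext_getElem?
    intro t
    by_cases ht : t < r
    · rw [h t (by omega), Nat.mod_eq_of_lt (by omega), List.getElem?_take, if_pos ht]
    · rw [List.getElem?_take, if_neg ht, List.getElem?_eq_none (by omega)]
  | succ n ih =>
    intro z hz h
    have e : (n + 1) * x.length = n * x.length + x.length := by ring
    have h1 : z.take x.length = x := by
      apply List.ext_getElem?
      intro t
      rw [List.getElem?_take]
      split_ifs with ht
      · rw [h t (by omega), Nat.mod_eq_of_lt ht]
      · rw [List.getElem?_eq_none (by omega)]
    have h2 := ih (z.drop x.length) (by rw [List.length_drop]; omega) (by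
      intro t ht
      rw [List.length_drop] at ht
      rw [List.getElem?_drop, h _ (by omega), Nat.add_mod_left])
    rw [List.replicate_succ, List.flatten_cons, List.append_assoc, ← h2]
    conv_lhs => rw [← List.take_append_drop x.length z, h1]

lemma containsPower_of_hasPow (v : List Bool)
    (h : HasPow (fun k => v.getD k false) v.length) : ContainsPower (7/3 : ℝ) v := by
  obtain ⟨st, len, q, hq, hlen, hL, hper⟩ := h
  have hzl : ((v.drop st).take len).length = len := by
    rw [List.length_take, List.length_drop]; omega
  have hget : ∀ t, t < len → ((v.drop st).take len)[t]? = some (v.getD (st + t) false) := by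
    intro t ht
    rw [List.getElem?_take, if_pos ht, List.getElem?_drop, List.getD_eq_getElem?_getD,
      List.getElem?_eq_getElem (by omega)]
    rfl
  generalize hz : (v.drop st).take len = z at hzl hget
  have hxl : (z.take q).length = q := by rw [List.length_take]; omega
  have hmod : ∀ t, t < z.length → z[t]? = (z.take q)[t % (z.take q).length]? := by
    rw [hxl]
    intro t
    induction t using Nat.strong_induction_on with
    | _ t ih =>
      intro ht
      by_cases htq : t < q
      · rw [Nat.mod_eq_of_lt htq, List.getElem?_take, if_pos htq]
      · have h1 := ih (t - q) (by omega) (by omega)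
        have h2 := hper (t - q) (by omega)
        have e : st + (t - q) + q = st + t := by omega
        rw [e] at h2
        rw [Nat.mod_eq_sub_mod (by omega), ← h1, hget _ (by omega), hget _ (by omega)]
        simpa using h2.symm
  have hdm : len / q * q + len % q = len := by
    rw [mul_comm]; exact Nat.div_add_mod len q
  have hdec := periodic_decomp (z.take q) (len / q) (len % q)
    (by rw [hxl]; exact Nat.mod_lt _ hq) z (by rw [hxl, hzl, hdm]) hmod
  have hrl : ((z.take q).take (len % q)).length = len % q := by
    rw [List.length_take, hxl]
    have := Nat.mod_lt len hq
    omega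
  have hqQ : (0 : ℚ) < q := by exact_mod_cast hq
  have hlenQ : (7 : ℚ) * q ≤ 3 * len := by exact_mod_cast hlen
  refine ⟨z, ?_, (len / q : ℕ) + ((len % q : ℕ) : ℚ) / q, ?_, len / q, z.take q,
    (z.take q).take (len % q), ?_, List.take_prefix _ _, hdec, ?_⟩
  · rw [← hz]
    exact (List.take_prefix _ _).isInfix.trans (List.drop_suffix _ _).isInfix
  · have : (7 / 3 : ℚ) ≤ (len / q : ℕ) + ((len % q : ℕ) : ℚ) / q := by
      have hdmQ : ((len / q : ℕ) : ℚ) * q + ((len % q : ℕ) : ℚ) = len := by exact_mod_cast hdm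
      have : ((len / q : ℕ) : ℚ) + ((len % q : ℕ) : ℚ) / q = len / q := by
        rw [← hdmQ]; field_simp
      rw [this, le_div_iff₀ hqQ]
      linarith
    have h3 : (((7 / 3 : ℚ)) : ℝ) ≤ (((len / q : ℕ) + ((len % q : ℕ) : ℚ) / q : ℚ) : ℝ) :=
      Rat.cast_le.mpr this
    refine le_trans (le_of_eq ?_) h3
    norm_num
  · intro h0
    rw [h0] at hxl
    simp at hxl
    omega
  · rw [hrl, hxl]

/-- In a power-free word, interior doubled letters occur at positions of a common parity. -/
lemma doubles_parity (f : ℕ → Bool) (L : ℕ) (h : ¬ HasPow f L) (t : ℕ) :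
    ∀ k, 1 ≤ k → k + 2 * t + 3 < L → f k = f (k + 1) →
      f (k + 2 * t + 1) = f (k + 2 * t + 2) → False := by
  induction t using Nat.strong_induction_on with
  | _ t ih =>
    intro k hk hL h1 h2
    have cube : ∀ p, p + 2 < L → f p = f (p + 1) → f (p + 1) = f (p + 2) → False := by
      intro p hp e1 e2
      refine h ⟨p, 3, 1, by omega, by omega, by omega, ?_⟩
      intro u hu
      have : u = 0 ∨ u = 1 := by omega
      rcases this with rfl | rfl
      · exact e1
      · exact e2
    have seven : ∀ p, 1 ≤ p → p + 5 < L → f p = f (p + 1) → f (p + 3) = f (p + 4) → False := by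
      intro p hp hpL e1 e2
      obtain ⟨p, rfl⟩ : ∃ p', p = p' + 1 := ⟨p - 1, by omega⟩
      have c1 := cube p (by omega)
      have c2 := cube (p + 1) (by omega)
      have c3 := cube (p + 3) (by omega)
      have c4 := cube (p + 4) (by omega)
      refine h ⟨p, 7, 3, by omega, by omega, by omega, ?_⟩
      simp only [add_assoc, Nat.reduceAdd] at *
      intro u hu
      have : u = 0 ∨ u = 1 ∨ u = 2 ∨ u = 3 := by omega
      rcases this with rfl | rfl | rfl | rfl <;> simp only [Nat.reduceAdd, add_zero, zero_add] <;>
        revert e1 e2 c1 c2 c3 c4 <;>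
        cases f p <;> cases f (p + 1) <;> cases f (p + 2) <;> cases f (p + 3) <;>
        cases f (p + 4) <;> cases f (p + 5) <;> cases f (p + 6) <;> simp
    by_cases t0 : t = 0
    · subst t0
      exact cube k (by omega) h1 h2
    by_cases t1 : t = 1
    · subst t1
      exact seven k hk (by omega) h1 h2
    by_cases d2 : f (k + 2) = f (k + 3)
    · refine ih (t - 1) (by omega) (k + 2) (by omega) (by omega) d2 ?_
      rw [show k + 2 + 2 * (t - 1) + 1 = k + 2 * t + 1 by omega,
        show k + 2 + 2 * (t - 1) + 2 = k + 2 * t + 2 by omega]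
      exact h2
    by_cases d4 : f (k + 4) = f (k + 5)
    · refine ih (t - 2) (by omega) (k + 4) (by omega) (by omega) d4 ?_
      rw [show k + 4 + 2 * (t - 2) + 1 = k + 2 * t + 1 by omega,
        show k + 4 + 2 * (t - 2) + 2 = k + 2 * t + 2 by omega]
      exact h2
    have d1 : ¬ f (k + 1) = f (k + 2) := fun e => cube k (by omega) h1 e
    have d3 : ¬ f (k + 3) = f (k + 4) := fun e => seven k hk (by omega) h1 e
    refine h ⟨k + 1, 5, 2, by omega, by omega, by omega, ?_⟩
    intro u hu
    have : u = 0 ∨ u = 1 ∨ u = 2 := by omega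
    simp only [add_assoc, Nat.reduceAdd]
    rcases this with rfl | rfl | rfl <;> simp only [Nat.reduceAdd, add_zero, zero_add] <;>
      revert d1 d2 d3 d4 <;>
      cases f (k + 1) <;> cases f (k + 2) <;> cases f (k + 3) <;>
      cases f (k + 4) <;> cases f (k + 5) <;> simp

/-- Powers lift along (a conjugate of) the Thue–Morse morphism. -/
lemma hasPow_lift (f : ℕ → Bool) (N p : ℕ) (hp : p < 2)
    (hd : ∀ k, k + 1 < 2 * N + 1 → k % 2 = p → f k ≠ f (k + 1))
    (h : HasPow (fun k => f (2 * k + 1)) N) : HasPow f (2 * N + 1) := by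
  obtain ⟨st, len, q, hq, hlen, hL, hper⟩ := h
  refine ⟨2 * st + p, 2 * len, 2 * q, by omega, by omega, by omega, ?_⟩
  intro u hu
  have key : ∀ k, k + q < st + len → st ≤ k → f (2 * k + 1) = f (2 * (k + q) + 1) := by
    intro k hk hs
    have := hper (k - st) (by omega)
    simp only at this
    rwa [show st + (k - st) = k by omega] at this
  by_cases hodd : (u + p) % 2 = 1
  · have := key (st + (u + p) / 2) (by omega) (by omega)
    rwa [show 2 * (st + (u + p) / 2) + 1 = 2 * st + p + u by omega,
      show 2 * (st + (u + p) / 2 + q) + 1 = 2 * st + p + u + 2 * q by omega] at this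
  · rcases (show p = 0 ∨ p = 1 by omega) with rfl | rfl
    · have := key (st + u / 2) (by omega) (by omega)
      rw [show 2 * (st + u / 2) + 1 = 2 * st + 0 + u + 1 by omega,
        show 2 * (st + u / 2 + q) + 1 = 2 * st + 0 + u + 2 * q + 1 by omega] at this
      have a1 := hd (2 * st + 0 + u) (by omega) (by omega)
      have a2 := hd (2 * st + 0 + u + 2 * q) (by omega) (by omega)
      rw [← this] at a2
      revert a1 a2
      cases f (2 * st + 0 + u) <;> cases f (2 * st + 0 + u + 1) <;>
        cases f (2 * st + 0 + u + 2 * q) <;> simp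
    · obtain ⟨c, rfl⟩ : ∃ c, u = 2 * c + 1 := ⟨u / 2, by omega⟩
      have := key (st + c) (by omega) (by omega)
      have a1 := hd (2 * (st + c) + 1) (by omega) (by omega)
      have a2 := hd (2 * (st + c + q) + 1) (by omega) (by omega)
      rw [← this] at a2
      rw [show 2 * st + 1 + (2 * c + 1) + 2 * q = 2 * (st + c + q) + 1 + 1 by omega,
        show 2 * st + 1 + (2 * c + 1) = 2 * (st + c) + 1 + 1 by omega]
      revert a1 a2
      cases f (2 * (st + c) + 1) <;> cases f (2 * (st + c) + 1 + 1) <;>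
        cases f (2 * (st + c + q) + 1 + 1) <;> simp

lemma main_fun (i : ℕ) : ∀ (j n m : ℕ) (f : ℕ → Bool),
    (n = 2 * 2 ^ i ∨ n = 3 * 2 ^ i) → (m = 2 * 2 ^ j ∨ m = 3 * 2 ^ j) → n ≤ m →
    (∀ t, t ≤ n → f (m - 1 + t) = f (m - 1 + t + n)) →
    (∀ t, t + 1 < m → f t = f (t + m + 2 * n)) →
    HasPow f (2 * m + 2 * n - 1) := by
  induction i with
  | zero =>
    intro j n m f hn hm hnm hw hs
    refine ⟨m - 1, 2 * n + 1, n, by omega, by omega, by omega, ?_⟩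
    intro t ht
    exact hw t (by omega)
  | succ i ih =>
    intro j n m f hn hm hnm hw hs
    have hpos : 0 < 2 ^ i := by positivity
    rw [pow_succ] at hn
    cases j with
    | zero => omega
    | succ j =>
      rw [pow_succ] at hm
      obtain ⟨n, rfl⟩ : ∃ c, n = 2 * c := ⟨n / 2, by omega⟩
      obtain ⟨m, rfl⟩ : ∃ c, m = 2 * c := ⟨m / 2, by omega⟩
      by_contra hno
      have hn2 : 2 ≤ n := by omega
      have hm2 : 2 ≤ m := by omega
      -- interior doubles have the same parity
      have hint : ∀ k l, 1 ≤ k → 1 ≤ l → k + 2 < 2 * (2 * m) + 2 * (2 * n) - 1 →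
          l + 2 < 2 * (2 * m) + 2 * (2 * n) - 1 → f k = f (k + 1) → f l = f (l + 1) →
          k % 2 = l % 2 := by
        have hlt : ∀ k l, k < l → 1 ≤ k → l + 2 < 2 * (2 * m) + 2 * (2 * n) - 1 →
            f k = f (k + 1) → f l = f (l + 1) → k % 2 = l % 2 := by
          intro k l hkl hk hl e1 e2
          by_contra hpar
          refine doubles_parity f _ hno ((l - k) / 2) k hk (by omega) e1 ?_
          rwa [show k + 2 * ((l - k) / 2) + 1 = l by omega,
            show k + 2 * ((l - k) / 2) + 2 = l + 1 by omega]
        intro k l hk hl hk2 hl2 e1 e2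
        rcases lt_trichotomy k l with h | h | h
        · exact hlt k l h hk hl2 e1 e2
        · rw [h]
        · exact (hlt l k h hl hk2 e2 e1).symm
      -- every double has an interior double of the same parity
      have hmove : ∀ k, k + 1 < 2 * (2 * m) + 2 * (2 * n) - 1 → f k = f (k + 1) →
          ∃ l, 1 ≤ l ∧ l + 2 < 2 * (2 * m) + 2 * (2 * n) - 1 ∧ f l = f (l + 1) ∧
            k % 2 = l % 2 := by
        intro k hk e
        by_cases k0 : k = 0
        · subst k0
          refine ⟨0 + 2 * m + 2 * (2 * n), by omega, by omega, ?_, by omega⟩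
          have h1 := hs 0 (by omega)
          have h2 := hs (0 + 1) (by omega)
          rw [← h1, e, h2]
          congr 1
          omega
        · by_cases k1 : k + 2 < 2 * (2 * m) + 2 * (2 * n) - 1
          · exact ⟨k, by omega, k1, e, rfl⟩
          · refine ⟨2 * m - 3, by omega, by omega, ?_, by omega⟩
            have h1 := hs (2 * m - 3) (by omega)
            have h2 := hs (2 * m - 3 + 1) (by omega)
            rw [h1, h2, show 2 * m - 3 + 2 * m + 2 * (2 * n) = k by omega,
              show 2 * m - 3 + 1 + 2 * m + 2 * (2 * n) = k + 1 by omega, e]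
      have hall : ∀ k l, k + 1 < 2 * (2 * m) + 2 * (2 * n) - 1 →
          l + 1 < 2 * (2 * m) + 2 * (2 * n) - 1 → f k = f (k + 1) → f l = f (l + 1) →
          k % 2 = l % 2 := by
        intro k l hk hl e1 e2
        obtain ⟨k', a1, a2, a3, a4⟩ := hmove k hk e1
        obtain ⟨l', b1, b2, b3, b4⟩ := hmove l hl e2
        have := hint k' l' a1 b1 a2 b2 a3 b3
        omega
      have hp : ∃ p, p < 2 ∧ ∀ k, k + 1 < 2 * (2 * m + 2 * n - 1) + 1 → k % 2 = p →
          f k ≠ f (k + 1) := by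
        by_cases hex : ∃ k, k + 1 < 2 * (2 * m) + 2 * (2 * n) - 1 ∧ f k = f (k + 1)
        · obtain ⟨k, hk, e⟩ := hex
          refine ⟨1 - k % 2, by omega, ?_⟩
          intro l hl hpar e2
          have := hall k l hk (by omega) e e2
          omega
        · exact ⟨0, by omega, fun l hl _ e => hex ⟨l, by omega, e⟩⟩
      obtain ⟨p, hp2, hd⟩ := hp
      apply hno
      rw [show 2 * (2 * m) + 2 * (2 * n) - 1 = 2 * (2 * m + 2 * n - 1) + 1 by omega]
      refine hasPow_lift f _ p hp2 hd ?_
      refine ih j n m _ (by omega) (by omega) (by omega) ?_ ?_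
      · intro t ht
        have := hw (2 * t) (by omega)
        rw [show 2 * (m - 1 + t) + 1 = 2 * m - 1 + 2 * t by omega, this]
        congr 1
        omega
      · intro t ht
        have := hs (2 * t + 1) (by omega)
        rw [this]
        congr 1
        omega

/-- For positive integers `i, j` and `7/3`-power-free words `w, s` with
`|w| = 2^{i+1} − 1` or `|w| = 3·2^i − 1`, `|s| = 2^{j+1} − 1` or `|s| = 3·2^j − 1`,
and `|s| ≥ |w|`, the word `s a w a w a s` contains a `7/3`-power. -/
theorem sawawas_contains_power (i j : ℕ) (hi : 1 ≤ i) (hj : 1 ≤ j)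
    (w s : List Bool) (hw : PowerFree (7/3 : ℝ) w) (hs : PowerFree (7/3 : ℝ) s)
    (hwl : w.length = 2 ^ (i + 1) - 1 ∨ w.length = 3 * 2 ^ i - 1)
    (hsl : s.length = 2 ^ (j + 1) - 1 ∨ s.length = 3 * 2 ^ j - 1)
    (hws : w.length ≤ s.length) (a : Bool) :
    ContainsPower (7/3 : ℝ) (s ++ [a] ++ w ++ [a] ++ w ++ [a] ++ s) := by
  apply containsPower_of_hasPow
  have hpi : 0 < 2 ^ i := by positivity
  have hpj : 0 < 2 ^ j := by positivity
  rw [pow_succ] at hwl hsl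
  have hmain := main_fun i j (w.length + 1) (s.length + 1)
    (fun k => (s ++ [a] ++ w ++ [a] ++ w ++ [a] ++ s).getD k false)
    (by omega) (by omega) (by omega) ?_ ?_
  · have e : (s ++ [a] ++ w ++ [a] ++ w ++ [a] ++ s).length
        = 2 * (s.length + 1) + 2 * (w.length + 1) - 1 := by
      simp only [List.length_append, List.length_cons, List.length_nil]
      omega
    rw [e]
    exact hmain
  · intro t ht
    have e1 : (s ++ [a] ++ w ++ [a] ++ w ++ [a] ++ s)
        = s ++ (([a] ++ w ++ [a]) ++ (w ++ [a] ++ s)) := by simp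
    have e2 : (s ++ [a] ++ w ++ [a] ++ w ++ [a] ++ s)
        = (s ++ ([a] ++ w)) ++ (([a] ++ w ++ [a]) ++ s) := by simp
    simp only [List.getD_eq_getElem?_getD]
    conv_lhs => rw [e1]
    conv_rhs => rw [e2]
    have l1 : ([a] ++ w ++ [a]).length = w.length + 2 := by simp
    have l2 : (s ++ ([a] ++ w)).length = s.length + (w.length + 1) := by simp
    generalize [a] ++ w ++ [a] = x at l1 ⊢
    generalize s ++ ([a] ++ w) = y at l2 ⊢
    rw [List.getElem?_append_right (l₁ := s) (by omega),
      List.getElem?_append_left (l₁ := x) (by omega),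
      List.getElem?_append_right (l₁ := y) (by omega),
      List.getElem?_append_left (l₁ := x) (by omega), l2]
    congr 2
    omega
  · intro t ht
    have e1 : (s ++ [a] ++ w ++ [a] ++ w ++ [a] ++ s)
        = s ++ ([a] ++ w ++ [a] ++ w ++ [a] ++ s) := by simp
    simp only [List.getD_eq_getElem?_getD]
    conv_lhs => rw [e1]
    have l2 : (s ++ [a] ++ w ++ [a] ++ w ++ [a]).length
        = s.length + 2 * w.length + 3 := by simp; omega
    rw [List.getElem?_append_left (by omega), List.getElem?_append_right (by omega), l2]
    congr 2
    omega
end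

section
/- Let h : Σ₂* → Σ₂* be a non-erasing morphism. If h(01101001) is 7/3-power-free, then there exists an integer k ≥ 0 such that either h = μ^k or h = E ∘ μ^k. -/
/-- Index form of `7/3`-power-freeness for the first `N` values of `w`. -/
def PF (w : ℕ → Bool) (N : ℕ) : Prop :=
  ∀ i p L : ℕ, 1 ≤ p → 7 * p ≤ 3 * L → i + L ≤ N → ∃ k, k + p < L ∧ w (i + k) ≠ w (i + k + p)

theorem periodic_decomp_s8 (x : List Bool) (hx : x ≠ []) : ∀ (m : ℕ) (z : List Bool), z.length ≤ m →
    (∀ k < z.length, z.getD k false = x.getD (k % x.length) false) →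
    z = (List.replicate (z.length / x.length) x).flatten ++ x.take (z.length % x.length) := by
  have hx0 : 0 < x.length := List.length_pos_iff.mpr hx
  intro m
  induction m with
  | zero =>
    intro z hz _
    have : z = [] := List.length_eq_zero_iff.mp (by omega)
    subst this
    simp
  | succ m ih =>
    intro z hz hk
    by_cases hlt : z.length < x.length
    · rw [Nat.div_eq_of_lt hlt, Nat.mod_eq_of_lt hlt]
      simp only [List.replicate_zero, List.flatten_nil, List.nil_append]
      apply List.ext_getElem
      · simp; omega
      · intro k h1 h2
        have := hk k h1
        rw [Nat.mod_eq_of_lt (by omega), List.getD_eq_getElem _ _ h1,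
          List.getD_eq_getElem _ _ (by omega)] at this
        simpa using this
    · push Not at hlt
      have h1 : z.take x.length = x := by
        apply List.ext_getElem
        · simp; omega
        · intro k h1 h2
          have := hk k (by omega)
          rw [Nat.mod_eq_of_lt (by omega), List.getD_eq_getElem _ _ (by omega),
            List.getD_eq_getElem _ _ (by omega)] at this
          simpa using this
      have h2 := ih (z.drop x.length) (by simp; omega) (by
        intro k hk'
        have hk'' : k + x.length < z.length := by simp at hk'; omega
        have := hk (x.length + k) (by omega)
        rw [Nat.add_mod_left] at this
        rw [← this, List.getD_eq_getElem _ _ hk', List.getD_eq_getElem _ _ (by omega)]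
        simp)
      have h3 : z.length / x.length = (z.length - x.length) / x.length + 1 := by
        rw [Nat.div_eq_sub_div hx0 hlt]
      have h4 : z.length % x.length = (z.length - x.length) % x.length := by
        rw [Nat.mod_eq_sub_mod hlt]
      rw [List.length_drop] at h2
      rw [h3, h4, List.replicate_succ, List.flatten_cons, List.append_assoc, ← h2]
      conv_lhs => rw [← List.take_append_drop x.length z, h1]

theorem powerFree_PF (W : List Bool) (h : PowerFree (7/3 : ℝ) W) :
    PF (fun k => W.getD k false) W.length := by
  intro i p L hp hL hN
  by_contra hcon
  push Not at hcon
  have hzl : ((W.drop i).take L).length = L := by simp; omega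
  set z := (W.drop i).take L with hz
  have hpL : p ≤ L := by omega
  have hxl : (z.take p).length = p := by simp; omega
  have hx : z.take p ≠ [] := by
    intro h0; rw [h0] at hxl; simp at hxl; omega
  have hzw : ∀ k < L, z.getD k false = W.getD (i + k) false := by
    intro k hk
    rw [List.getD_eq_getElem _ _ (by omega), List.getD_eq_getElem _ _ (by omega)]
    simp [hz]
  have hper : ∀ k, k < L → z.getD k false = z.getD (k % p) false := by
    intro k
    induction k using Nat.strong_induction_on with
    | _ k ih =>
      intro hk
      by_cases hkp : k < p
      · rw [Nat.mod_eq_of_lt hkp]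
      · push Not at hkp
        have h1 := hcon (k - p) (by omega)
        have h2 := ih (k - p) (by omega) (by omega)
        rw [← Nat.mod_eq_sub_mod hkp] at h2
        rw [← h2, hzw k hk, hzw (k - p) (by omega)]
        rw [h1]
        congr 1; omega
  refine h z ?_ ((L / p : ℕ) + ((L % p : ℕ) : ℚ) / (p : ℚ)) ?_ ⟨L / p, z.take p, (z.take p).take (L % p), hx,
    List.take_prefix _ _, ?_, ?_⟩
  · exact ((List.take_prefix _ _).isInfix).trans (List.drop_suffix _ _).isInfix
  · have hq : (7/3 : ℚ) ≤ ((L / p : ℕ) + ((L % p : ℕ) : ℚ) / (p : ℚ)) := by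
      have hp' : (0 : ℚ) < p := by exact_mod_cast hp
      have hdm : ((p * (L / p) + L % p : ℕ) : ℚ) = (L : ℚ) := by rw [Nat.div_add_mod]
      push_cast at hdm
      have : ((L / p : ℕ) + ((L % p : ℕ) : ℚ) / (p : ℚ)) = (L : ℚ) / p := by
        rw [eq_div_iff hp'.ne', ← hdm]; field_simp
      rw [this, le_div_iff₀ hp']
      have : (7 * p : ℚ) ≤ 3 * L := by exact_mod_cast hL
      linarith
    have := (Rat.cast_le (K := ℝ)).mpr hq
    push_cast at this ⊢
    exact this
  · have := periodic_decomp_s8 (z.take p) hx z.length z le_rfl (by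
      intro k hk
      rw [hxl, hper k (by omega)]
      have : k % p < p := Nat.mod_lt _ hp
      rw [List.getD_eq_getElem _ _ (by omega), List.getD_eq_getElem _ _ (by omega)]
      simp)
    rw [hxl, hzl] at this
    exact this
  · rw [hxl]
    congr 3
    rw [List.length_take, hxl]
    exact Nat.min_eq_left (Nat.mod_lt _ hp).le

theorem PF_desub (w : ℕ → Bool) (N s N' : ℕ) (h : PF w N) (hs : s + 2 * N' ≤ N)
    (hb : ∀ k < N', w (s + 2 * k + 1) = !w (s + 2 * k)) : PF (fun k => w (s + 2 * k)) N' := by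
  intro i p L hp hL hN
  by_contra hcon
  push Not at hcon
  obtain ⟨k, hk, hne⟩ := h (s + 2 * i) (2 * p) (2 * L) (by omega) (by omega) (by omega)
  apply hne
  have h1 := hcon (k / 2) (by omega)
  rcases Nat.even_or_odd' k with ⟨c, rfl | rfl⟩
  · rw [show 2 * c / 2 = c by omega] at h1
    convert h1 using 2 <;> ring
  · rw [show (2 * c + 1) / 2 = c by omega] at h1
    have h2 := hb (i + c) (by omega)
    have h3 := hb (i + c + p) (by omega)
    rw [← h1, ← h2] at h3
    rw [show s + 2 * i + (2 * c + 1) = s + 2 * (i + c) + 1 by ring,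
      show s + 2 * (i + c) + 1 + 2 * p = s + 2 * (i + c + p) + 1 by ring]
    exact h3.symm

/-- A `7/3`-power-free window of five letters contains two equal adjacent letters. -/
theorem PF_five (w : ℕ → Bool) (N i : ℕ) (h : PF w N) (hi : i + 5 ≤ N) :
    ∃ d, d ≤ 3 ∧ w (i + d) = w (i + d + 1) := by
  by_contra hcon
  push Not at hcon
  obtain ⟨k, hk, hne⟩ := h i 2 5 (by omega) (by omega) hi
  have h1 := hcon k (by omega)
  have h2 := hcon (k + 1) (by omega)
  rw [show i + (k + 1) = i + k + 1 by ring] at h2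
  revert h1 h2 hne
  rw [show i + k + 2 = i + k + 1 + 1 by ring]
  cases w (i + k) <;> cases w (i + k + 1) <;> cases w (i + k + 1 + 1) <;> simp

theorem PF_par (w : ℕ → Bool) (N : ℕ) (h : PF w N) : ∀ d i, 1 ≤ i → i + d + 2 < N →
    w i = w (i + 1) → w (i + d) = w (i + d + 1) → d % 2 = 0 := by
  intro d
  induction d using Nat.strong_induction_on with
  | _ d ih =>
    intro i hi hN h1 h2
    by_cases hex : ∃ e, 1 ≤ e ∧ e < d ∧ w (i + e) = w (i + e + 1)
    · obtain ⟨e, he1, he2, he⟩ := hex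
      have a1 := ih e he2 i hi (by omega) h1 he
      have a2 := ih (d - e) (by omega) (i + e) (by omega) (by omega) he
        (by rw [show i + e + (d - e) = i + d by omega]; exact h2)
      omega
    · push Not at hex
      have hd : d ≤ 4 := by
        by_contra hd
        obtain ⟨e, he, he'⟩ := PF_five w N (i + 1) h (by omega)
        exact hex (e + 1) (by omega) (by omega)
          (by rw [show i + (e + 1) = i + 1 + e by ring]; exact he')
      have c1 : ∀ j, j + 3 ≤ N → w j = w (j + 1) → w (j + 1) = w (j + 2) → False := by
        intro j hj e1 e2
        obtain ⟨k, hk, hne⟩ := h j 1 3 (by omega) (by omega) hj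
        have : k = 0 ∨ k = 1 := by omega
        rcases this with rfl | rfl
        · exact hne e1
        · exact hne e2
      rcases (by omega : d = 1 ∨ d = 3 ∨ d % 2 = 0) with rfl | rfl | hd'
      · exact (c1 i (by omega) h1 h2).elim
      · exfalso
        obtain ⟨i, rfl⟩ : ∃ j, i = j + 1 := ⟨i - 1, by omega⟩
        have x1 := c1 i (by omega)
        have x2 := c1 (i + 4) (by omega)
        have x3 := hex 1 (by omega) (by omega)
        have x4 := hex 2 (by omega) (by omega)
        obtain ⟨k, hk, hne⟩ := h i 3 7 (by omega) (by omega) (by omega)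
        have : k = 0 ∨ k = 1 ∨ k = 2 ∨ k = 3 := by omega
        simp only [add_assoc, Nat.reduceAdd] at *
        rcases this with rfl | rfl | rfl | rfl <;>
        · simp only [add_assoc, Nat.reduceAdd, add_zero, zero_add] at *
          revert x1 x2 x3 x4 h1 h2 hne
          clear * -
          generalize w i = b0
          generalize w (i + 1) = b1
          generalize w (i + 2) = b2
          generalize w (i + 3) = b3
          generalize w (i + 4) = b4
          generalize w (i + 5) = b5
          generalize w (i + 6) = b6
          revert b0 b1 b2 b3 b4 b5 b6
          decide
      · exact hd'

theorem PF_par' (w : ℕ → Bool) (N : ℕ) (h : PF w N) (i j : ℕ) (hi : 1 ≤ i) (hj : 1 ≤ j)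
    (hi' : i + 2 < N) (hj' : j + 2 < N)
    (h1 : w i = w (i + 1)) (h2 : w j = w (j + 1)) : i % 2 = j % 2 := by
  rcases le_total i j with hij | hij
  · obtain ⟨d, rfl⟩ := Nat.exists_eq_add_of_le hij
    have := PF_par w N h d i hi hj' h1 h2
    omega
  · obtain ⟨d, rfl⟩ := Nat.exists_eq_add_of_le hij
    have := PF_par w N h d j hj hi' h2 h1
    omega

theorem PF_sync (w : ℕ → Bool) (N : ℕ) (h : PF w N) :
    ∃ s, (s = 1 ∨ s = 2) ∧ ∀ k, s + 2 * k + 2 < N → w (s + 2 * k + 1) = !w (s + 2 * k) := by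
  by_contra hcon
  push Not at hcon
  obtain ⟨k, hk, hk'⟩ := hcon 1 (Or.inl rfl)
  obtain ⟨l, hl, hl'⟩ := hcon 2 (Or.inr rfl)
  have := PF_par' w N h _ _ (by omega) (by omega) hk hl
    (by revert hk'; cases w (1 + 2 * k + 1) <;> cases w (1 + 2 * k) <;> simp)
    (by revert hl'; cases w (2 + 2 * l + 1) <;> cases w (2 + 2 * l) <;> simp)
  omega

/-- No overlap of period `p` with margins at least `p - 2` on both sides. -/
theorem no_overlap : ∀ (p : ℕ) (w : ℕ → Bool) (N i M : ℕ), PF w N → 1 ≤ p → p ≤ M + 2 → M ≤ i →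
    i + 2 * p + 1 + M ≤ N → (∀ k ≤ p, w (i + k) = w (i + k + p)) → False := by
  intro p
  induction p using Nat.strong_induction_on with
  | _ p ih =>
    intro w N i M h hp hM hi hN hov
    by_cases hp3 : p ≤ 3
    · obtain ⟨k, hk, hne⟩ := h i p (2 * p + 1) hp (by omega) (by omega)
      exact hne (hov k (by omega))
    rcases Nat.even_or_odd' p with ⟨c, hc | hc⟩
    · obtain ⟨s, hs, hb⟩ := PF_sync w N h
      have hPF := PF_desub w N s ((N - 1 - s) / 2) h (by omega) (fun k hk => hb k (by omega))
      rcases Nat.even_or_odd' (i - s) with ⟨j, hj | hj⟩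
      · refine ih c (by omega) _ _ j ((M - 2) / 2) hPF (by omega) (by omega) (by omega) (by omega) ?_
        intro k hk
        have := hov (2 * k) (by omega)
        convert this using 2 <;> omega
      · refine ih c (by omega) _ _ j ((M - 2) / 2) hPF (by omega) (by omega) (by omega) (by omega) ?_
        intro k hk
        have := hov (2 * k) (by omega)
        have h1 := hb (j + k) (by omega)
        have h2 := hb (j + k + c) (by omega)
        rw [show s + 2 * (j + k) + 1 = i + 2 * k by omega] at h1
        rw [show s + 2 * (j + k + c) + 1 = i + 2 * k + p by omega, ← this, h1] at h2
        simpa using h2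
    · obtain ⟨d, hd, he⟩ := PF_five w N i h (by omega)
      have := PF_par' w N h (i + d) (i + d + p) (by omega) (by omega) (by omega) (by omega) he
        (by rw [← hov d (by omega), he, show i + d + p + 1 = i + (d + 1) + p by ring,
              ← hov (d + 1) (by omega)]; rfl)
      omega

theorem getD_mid (x a y : List Bool) (k : ℕ) (hk : k < a.length) :
    (x ++ (a ++ y)).getD (x.length + k) false = a.getD k false := by
  rw [List.getD_append_right _ _ _ _ (by omega), Nat.add_sub_cancel_left,
    List.getD_append _ _ _ _ hk]

def alts : List (List Bool) :=
  [[false], [true], [false, true], [true, false], [false, true, false], [true, false, true],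
   [false, true, false, true], [true, false, true, false]]

theorem alts_mem (a : List Bool) (ha : a ≠ []) (hl : a.length ≤ 4)
    (h : ∀ k, k + 1 < a.length → a.getD k false ≠ a.getD (k + 1) false) : a ∈ alts := by
  have h0 := h 0
  have h1 := h 1
  have h2 := h 2
  clear h
  match a, ha, hl with
  | [x], _, _ => revert x; decide
  | [x, y], _, _ => revert x y; decide
  | [x, y, z], _, _ => revert x y z; decide
  | [x, y, z, t], _, _ => revert x y z t; decide
  | _ :: _ :: _ :: _ :: _ :: _, _, hl => simp at hl; omega

/-- `W = abbabaab`. -/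
def big (a b : List Bool) : List Bool := a ++ b ++ b ++ a ++ b ++ a ++ a ++ b

/-- Search for a short power of exponent at least `7/3`. -/
def hasPow (W : List Bool) : Bool :=
  (List.range W.length).any fun i => [(1, 3), (2, 5), (3, 7), (4, 10), (6, 14)].any fun (q : ℕ × ℕ) =>
    decide (i + q.2 ≤ W.length) &&
      (List.range (q.2 - q.1)).all fun k => W.getD (i + k) false == W.getD (i + k + q.1) false

theorem PF_hasPow (W : List Bool) (h : PF (fun k => W.getD k false) W.length) :
    hasPow W = false := by
  by_contra hc
  simp only [hasPow, Bool.not_eq_false, List.any_eq_true, List.mem_range, Bool.and_eq_true,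
    decide_eq_true_eq, List.all_eq_true, beq_iff_eq] at hc
  obtain ⟨i, hi, q, hq, hN, hall⟩ := hc
  have hq' : 1 ≤ q.1 ∧ 7 * q.1 ≤ 3 * q.2 := by
    revert hq; revert q
    intro q _ _ hq
    simp only [List.mem_cons, List.not_mem_nil, or_false] at hq
    rcases hq with rfl | rfl | rfl | rfl | rfl <;> simp
  obtain ⟨k, hk, hne⟩ := h i q.1 q.2 hq'.1 hq'.2 hN
  exact hne (hall k (by omega))

set_option maxRecDepth 100000 in
set_option maxHeartbeats 4000000 in
theorem alts_check : ∀ a ∈ alts, ∀ b ∈ alts, hasPow (big a b) = false →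
    (a = [false] ∧ b = [true]) ∨ (a = [true] ∧ b = [false]) ∨
    (a = [false, true] ∧ b = [true, false]) ∨ (a = [true, false] ∧ b = [false, true]) := by
  decide +kernel

theorem mu_append (x y : List Bool) : mu (x ++ y) = mu x ++ mu y := by simp [mu]

theorem mu_cons (c : Bool) (x : List Bool) : mu (c :: x) = c :: (!c) :: mu x := by
  cases c <;> simp [mu, muLetter]

theorem mu_length (x : List Bool) : (mu x).length = 2 * x.length := by
  induction x with
  | nil => rfl
  | cons c x ih => rw [mu_cons]; simp [ih]; omega

theorem mu_replicate (n : ℕ) (x : List Bool) :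
    mu (List.replicate n x).flatten = (List.replicate n (mu x)).flatten := by
  induction n with
  | zero => rfl
  | succ n ih => simp [List.replicate_succ, mu_append, ih]

theorem powerFree_of_mu (α : ℝ) (W : List Bool) (h : PowerFree α (mu W)) : PowerFree α W := by
  rintro z ⟨s, t, rfl⟩ β hβ ⟨n, x, x', hx, ⟨y, rfl⟩, rfl, hn⟩
  refine h (mu ((List.replicate n (x' ++ y)).flatten ++ x')) ⟨mu s, mu t, by simp [mu_append]⟩ β hβ
    ⟨n, mu (x' ++ y), mu x', ?_, ⟨mu y, by simp [mu_append]⟩, ?_, ?_⟩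
  · intro h0
    have := mu_length (x' ++ y)
    rw [h0] at this
    have : (x' ++ y).length = 0 := by simp only [List.length_nil] at this; omega
    exact hx (List.length_eq_zero_iff.mp this)
  · rw [mu_append, mu_replicate]
  · rw [mu_length, mu_length, ← hn]
    congr 1
    push_cast
    exact mul_div_mul_left _ _ two_ne_zero

theorem exists_mu : ∀ (n : ℕ) (a : List Bool), a.length = 2 * n →
    (∀ k < n, a.getD (2 * k + 1) false = !a.getD (2 * k) false) → ∃ a', a = mu a' := by
  intro n
  induction n with
  | zero => intro a ha _; exact ⟨[], by simpa [mu] using ha⟩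
  | succ n ih =>
    intro a ha h
    match a, ha, h with
    | [], ha, _ => simp at ha
    | [_], ha, _ => simp at ha; omega
    | x :: y :: t, ha, h =>
      obtain ⟨t', rfl⟩ := ih t (by simp at ha; omega) (by
        intro k hk
        have := h (k + 1) (by omega)
        simpa [Nat.mul_add] using this)
      have h0 := h 0 (by omega)
      simp at h0
      exact ⟨x :: t', by rw [mu_cons, h0]⟩

theorem step (a b : List Bool) (ha : a ≠ []) (hb : b ≠ [])
    (h : PowerFree (7/3 : ℝ) (big a b)) :
    (a = [false] ∧ b = [true]) ∨ (a = [true] ∧ b = [false]) ∨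
    ∃ a' b', a = mu a' ∧ b = mu b' := by
  have hPF := powerFree_PF _ h
  have hch := PF_hasPow _ hPF
  have hlen : (big a b).length = 4 * a.length + 4 * b.length := by simp [big]; omega
  rw [hlen] at hPF
  have hp : 0 < a.length := List.length_pos_iff.mpr ha
  have hq : 0 < b.length := List.length_pos_iff.mpr hb
  obtain ⟨w, hw⟩ : ∃ w : ℕ → Bool, w = fun k => (big a b).getD k false := ⟨_, rfl⟩
  rw [← hw] at hPF
  obtain ⟨p, hpd⟩ : ∃ p, p = a.length := ⟨_, rfl⟩
  obtain ⟨q, hqd⟩ : ∃ q, q = b.length := ⟨_, rfl⟩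
  have a1 : ∀ k < p, w (0 + k) = a.getD k false := by
    intro k hk
    have := getD_mid [] a (b ++ b ++ a ++ b ++ a ++ a ++ b) k (by omega)
    rw [hw]; convert this using 2 <;> simp [big]
  have b1 : ∀ k < q, w (p + k) = b.getD k false := by
    intro k hk
    have := getD_mid a b (b ++ a ++ b ++ a ++ a ++ b) k (by omega)
    rw [hw]; convert this using 2 <;> simp [big]; omega
  have b2 : ∀ k < q, w (p + q + k) = b.getD k false := by
    intro k hk
    have := getD_mid (a ++ b) b (a ++ b ++ a ++ a ++ b) k (by omega)
    rw [hw]; convert this using 2 <;> simp [big]; omega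
  have a2 : ∀ k < p, w (p + 2 * q + k) = a.getD k false := by
    intro k hk
    have := getD_mid (a ++ b ++ b) a (b ++ a ++ a ++ b) k (by omega)
    rw [hw]; convert this using 2 <;> simp [big]; omega
  have b3 : ∀ k < q, w (2 * p + 2 * q + k) = b.getD k false := by
    intro k hk
    have := getD_mid (a ++ b ++ b ++ a) b (a ++ a ++ b) k (by omega)
    rw [hw]; convert this using 2 <;> simp [big]; omega
  have a3 : ∀ k < p, w (2 * p + 3 * q + k) = a.getD k false := by
    intro k hk
    have := getD_mid (a ++ b ++ b ++ a ++ b) a (a ++ b) k (by omega)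
    rw [hw]; convert this using 2 <;> simp [big]; omega
  have a4 : ∀ k < p, w (3 * p + 3 * q + k) = a.getD k false := by
    intro k hk
    have := getD_mid (a ++ b ++ b ++ a ++ b ++ a) a b k (by omega)
    rw [hw]; convert this using 2 <;> simp [big]; omega
  rw [← hpd, ← hqd] at hPF
  rw [← hpd] at hp
  rw [← hqd] at hq
  by_cases hpair : (∃ k, k + 1 < p ∧ a.getD k false = a.getD (k + 1) false) ∨
      (∃ k, k + 1 < q ∧ b.getD k false = b.getD (k + 1) false)
  · right; right
    -- both lengths are even
    have heven : p % 2 = 0 ∧ q % 2 = 0 := by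
      rcases hpair with ⟨k, hk, he⟩ | ⟨k, hk, he⟩
      · have e2 := a2 k (by omega)
        have e2' := a2 (k + 1) hk
        have e3 := a3 k (by omega)
        have e3' := a3 (k + 1) hk
        have e4 := a4 k (by omega)
        have e4' := a4 (k + 1) hk
        have x1 := PF_par' w _ hPF (p + 2 * q + k) (2 * p + 3 * q + k) (by omega) (by omega)
          (by omega) (by omega) (e2.trans (he.trans e2'.symm)) (e3.trans (he.trans e3'.symm))
        have x2 := PF_par' w _ hPF (3 * p + 3 * q + k) (2 * p + 3 * q + k) (by omega) (by omega)
          (by omega) (by omega) (e4.trans (he.trans e4'.symm)) (e3.trans (he.trans e3'.symm))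
        omega
      · have e2 := b1 k (by omega)
        have e2' := b1 (k + 1) hk
        have e3 := b2 k (by omega)
        have e3' := b2 (k + 1) hk
        have e4 := b3 k (by omega)
        have e4' := b3 (k + 1) hk
        have x1 := PF_par' w _ hPF (p + k) (p + q + k) (by omega) (by omega)
          (by omega) (by omega) (e2.trans (he.trans e2'.symm)) (e3.trans (he.trans e3'.symm))
        have x2 := PF_par' w _ hPF (2 * p + 2 * q + k) (p + q + k) (by omega) (by omega)
          (by omega) (by omega) (e4.trans (he.trans e4'.symm)) (e3.trans (he.trans e3'.symm))
        omega
    -- last letters differ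
    have hlast : a.getD (p - 1) false ≠ b.getD (q - 1) false := by
      intro he
      rcases le_total q p with hqp | hqp
      · refine no_overlap q w _ (p - 1) (p - 1) hPF hq (by omega) le_rfl (by omega) ?_
        intro k hk
        rcases Nat.eq_zero_or_pos k with rfl | hk0
        · have := a1 (p - 1) (by omega)
          have h2 := b1 (q - 1) (by omega)
          rw [zero_add] at this
          rw [add_zero, this, he, ← h2]
          congr 1; omega
        · have h1 := b1 (k - 1) (by omega)
          have h2 := b2 (k - 1) (by omega)
          rw [← h2] at h1
          convert h1 using 2 <;> omega
      · refine no_overlap p w _ (2 * p + 3 * q - 1) q hPF hp (by omega) (by omega) (by omega) ?_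
        intro k hk
        rcases Nat.eq_zero_or_pos k with rfl | hk0
        · have := b3 (q - 1) (by omega)
          have h2 := a3 (p - 1) (by omega)
          rw [← he, ← h2] at this
          convert this using 2 <;> omega
        · have h1 := a3 (k - 1) (by omega)
          have h2 := a4 (k - 1) (by omega)
          rw [← h2] at h1
          convert h1 using 2 <;> omega
    obtain ⟨s, hs, hsync⟩ := PF_sync w _ hPF
    rcases hs with rfl | rfl
    · exfalso
      have h1 := hsync ((p - 2) / 2) (by omega)
      have h2 := hsync ((p + q - 2) / 2) (by omega)
      have h3 := a1 (p - 1) (by omega)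
      have h4 := b1 (q - 1) (by omega)
      have h5 := b1 0 (by omega)
      have h6 := b2 0 (by omega)
      rw [show 1 + 2 * ((p - 2) / 2) + 1 = p + 0 by omega,
        show 1 + 2 * ((p - 2) / 2) = 0 + (p - 1) by omega, h3, h5] at h1
      rw [show 1 + 2 * ((p + q - 2) / 2) + 1 = p + q + 0 by omega,
        show 1 + 2 * ((p + q - 2) / 2) = p + (q - 1) by omega, h4, h6, h1] at h2
      exact hlast (by simpa using h2)
    · obtain ⟨a', ha'⟩ := exists_mu (p / 2) a (by omega) (by
        intro k hk
        have h1 := hsync ((p + 2 * q) / 2 + k - 1) (by omega)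
        have h2 := a2 (2 * k) (by omega)
        have h3 := a2 (2 * k + 1) (by omega)
        rw [← h2, ← h3]
        convert h1 using 2
        · omega
        · congr 1; omega)
      obtain ⟨b', hb'⟩ := exists_mu (q / 2) b (by omega) (by
        intro k hk
        have h1 := hsync ((p + q) / 2 + k - 1) (by omega)
        have h2 := b2 (2 * k) (by omega)
        have h3 := b2 (2 * k + 1) (by omega)
        rw [← h2, ← h3]
        convert h1 using 2
        · omega
        · congr 1; omega)
      exact ⟨a', b', ha', hb'⟩
  · push Not at hpair
    obtain ⟨hA, hB⟩ := hpair
    have hp4 : p ≤ 4 := by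
      by_contra hc
      obtain ⟨d, hd, he⟩ := PF_five w _ (p + 2 * q) hPF (by omega)
      apply hA d (by omega)
      rw [← a2 d (by omega), ← a2 (d + 1) (by omega), he]
      rfl
    have hq4 : q ≤ 4 := by
      by_contra hc
      obtain ⟨d, hd, he⟩ := PF_five w _ (p + q) hPF (by omega)
      apply hB d (by omega)
      rw [← b2 d (by omega), ← b2 (d + 1) (by omega), he]
      rfl
    have hma := alts_mem a ha (by omega) (by rw [← hpd]; exact hA)
    have hmb := alts_mem b hb (by omega) (by rw [← hqd]; exact hB)
    rcases alts_check a hma b hmb hch with h1 | h1 | ⟨rfl, rfl⟩ | ⟨rfl, rfl⟩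
    · exact Or.inl h1
    · exact Or.inr (Or.inl h1)
    · exact Or.inr (Or.inr ⟨[false], [true], rfl, rfl⟩)
    · exact Or.inr (Or.inr ⟨[true], [false], rfl, rfl⟩)

theorem main_letters : ∀ (n : ℕ) (a b : List Bool), a.length + b.length ≤ n → a ≠ [] → b ≠ [] →
    PowerFree (7/3 : ℝ) (big a b) → ∃ k : ℕ, (a = mu^[k] [false] ∧ b = mu^[k] [true]) ∨
      (a = mu^[k] [true] ∧ b = mu^[k] [false]) := by
  intro n
  induction n with
  | zero =>
    intro a b hl ha _ _
    exact (ha (List.length_eq_zero_iff.mp (by omega))).elim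
  | succ n ih =>
    intro a b hl ha hb h
    rcases step a b ha hb h with h1 | h1 | ⟨a', b', rfl, rfl⟩
    · exact ⟨0, Or.inl h1⟩
    · exact ⟨0, Or.inr h1⟩
    · have ha' : a' ≠ [] := by rintro rfl; exact ha rfl
      have hb' : b' ≠ [] := by rintro rfl; exact hb rfl
      have := List.length_pos_iff.mpr ha'
      rw [mu_length, mu_length] at hl
      obtain ⟨k, hk⟩ := ih a' b' (by omega) ha' hb' (powerFree_of_mu _ _ (by
        simpa [big, mu_append] using h))
      refine ⟨k + 1, ?_⟩
      simp only [Function.iterate_succ_apply']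
      rcases hk with ⟨h1, h2⟩ | ⟨h1, h2⟩
      · exact Or.inl ⟨by rw [h1], by rw [h2]⟩
      · exact Or.inr ⟨by rw [h1], by rw [h2]⟩

theorem morph_nil (h : List Bool → List Bool) (hm : IsMorphism h) : h [] = [] := by
  have := congrArg List.length (hm [] [])
  simp only [List.append_nil, List.length_append] at this
  exact List.length_eq_zero_iff.mp (by omega)

theorem morph_ext (f g : List Bool → List Bool) (hf : IsMorphism f) (hg : IsMorphism g)
    (h0 : f [false] = g [false]) (h1 : f [true] = g [true]) : f = g := by
  funext w
  induction w with
  | nil => rw [morph_nil f hf, morph_nil g hg]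
  | cons c w ih =>
    have e1 := hf [c] w
    have e2 := hg [c] w
    rw [List.singleton_append] at e1 e2
    rw [e1, e2, ih]
    cases c
    · rw [h0]
    · rw [h1]

theorem mu_iter_morph (k : ℕ) : IsMorphism mu^[k] := by
  induction k with
  | zero => intro x y; rfl
  | succ k ih =>
    intro x y
    simp only [Function.iterate_succ_apply']
    rw [ih x y, mu_append]

theorem eMorph_append (x y : List Bool) : eMorph (x ++ y) = eMorph x ++ eMorph y := by
  simp [eMorph]

theorem eMorph_mu (x : List Bool) : eMorph (mu x) = mu (eMorph x) := by
  induction x with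
  | nil => rfl
  | cons c x ih =>
    rw [mu_cons]
    simp only [eMorph, List.map_cons] at ih ⊢
    rw [mu_cons, ih]

theorem eMorph_iter (k : ℕ) (x : List Bool) : eMorph (mu^[k] x) = mu^[k] (eMorph x) := by
  induction k with
  | zero => rfl
  | succ k ih => simp only [Function.iterate_succ_apply']; rw [eMorph_mu, ih]

/-- If `h` is a non-erasing morphism such that `h(01101001)` is `7/3`-power-free,
then `h = μ^k` or `h = E ∘ μ^k` for some `k ≥ 0`. -/
theorem power_free_morphism_is_thue_morse (h : List Bool → List Bool)
    (hmor : IsMorphism h) (hne : NonErasing h)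
    (hpf : PowerFree (7/3 : ℝ) (h w01101001)) :
    ∃ k : ℕ, h = mu^[k] ∨ h = eMorph ∘ mu^[k] := by
  have hW : h w01101001 = big (h [false]) (h [true]) := by
    have : w01101001 = [false] ++ [true] ++ [true] ++ [false] ++ [true] ++ [false] ++ [false]
      ++ [true] := rfl
    rw [this]
    unfold big
    simp only [hmor _ _]
  rw [hW] at hpf
  obtain ⟨k, ⟨h0, h1⟩ | ⟨h0, h1⟩⟩ := main_letters _ _ _ le_rfl hne.1 hne.2 hpf
  · exact ⟨k, Or.inl (morph_ext _ _ hmor (mu_iter_morph k) h0 h1)⟩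
  · refine ⟨k, Or.inr (morph_ext _ _ hmor ?_ ?_ ?_)⟩
    · intro x y
      simp only [Function.comp]
      rw [mu_iter_morph k x y, eMorph_append]
    · rw [h0, Function.comp, eMorph_iter]; rfl
    · rw [h1, Function.comp, eMorph_iter]; rfl
end
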